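/- arXiv:1712.00469 — 4 statements merged into one kernel-verified Lean document; each statement's English description precedes it below -/
import Mathlib

section
/- For all elements a₁, a₂ of the tree structure 𝒜, either a₁ belongs to the substructure of 𝒜 generated by {a₂}, or a₂ belongs to the substructure of 𝒜 generated by {a₁}. In particular, 𝒜 is generated by the single element (0,⟨⟩). -/
open FirstOrder FirstOrder.Language

/-- The domain of the tree structure `𝒜`: pairs `(n,τ)` with `n ∈ ℕ` and `τ ∈ ℤ^{<ω}` a
finite sequence of integers. -/
abbrev TreeDom : Type := ℕ × List ℤ

/-- The function symbols of the language `L₀`: a unary symbol `p` and a unary symbol `c i`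
for each integer `i ∈ ℤ`. -/
inductive TreeFn : ℕ → Type
  | p : TreeFn 1
  | c : ℤ → TreeFn 1

/-- The language `L₀`, with unary function symbols `p` and `c_i` (`i ∈ ℤ`) and no relation
symbols. -/
def L0 : Language := ⟨TreeFn, fun _ => Empty⟩

/-- The parent function: `p^𝒜(n,τ) = (n,τ⁻)` if `τ` is nonempty (`τ⁻` being `τ` with its
last entry removed), and `p^𝒜(n,⟨⟩) = (n+1,⟨⟩)`. -/
def pInterp (x : TreeDom) : TreeDom :=
  if x.2 = [] then (x.1 + 1, []) else (x.1, x.2.dropLast)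

/-- The `i`-th child function: `c_i^𝒜(n,τ) = (n, τ⌢i)`, the sequence `τ` with `i`
appended. -/
def cInterp (i : ℤ) (x : TreeDom) : TreeDom := (x.1, x.2 ++ [i])

/-- The tree `L₀`-structure `𝒜` on `TreeDom`. -/
instance treeStructure : L0.Structure TreeDom where
  funMap {_n} f x :=
    match f with
    | TreeFn.p => pInterp (x 0)
    | TreeFn.c i => cInterp i (x 0)
  RelMap {_n} r _ := r.elim

theorem mem_p (S : L0.Substructure TreeDom) (x : TreeDom) (h : x ∈ S) : pInterp x ∈ S :=
  S.fun_mem (n := 1) TreeFn.p (fun _ => x) (fun _ => h)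

theorem mem_c (S : L0.Substructure TreeDom) (i : ℤ) (x : TreeDom) (h : x ∈ S) :
    cInterp i x ∈ S :=
  S.fun_mem (n := 1) (TreeFn.c i) (fun _ => x) (fun _ => h)

theorem mem_root (S : L0.Substructure TreeDom) (n : ℕ) (t : List ℤ)
    (h : ((n, t) : TreeDom) ∈ S) : ((n, []) : TreeDom) ∈ S := by
  induction t using List.reverseRecOn with
  | nil => exact h
  | append_singleton l a ih =>
    apply ih
    have := mem_p S _ h
    simpa [pInterp] using this

theorem mem_of_le (S : L0.Substructure TreeDom) (n m : ℕ) (t u : List ℤ)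
    (h : ((n, t) : TreeDom) ∈ S) (hnm : n ≤ m) : ((m, u) : TreeDom) ∈ S := by
  induction u using List.reverseRecOn with
  | nil =>
    induction m, hnm using Nat.le_induction with
    | base => exact mem_root S n t h
    | succ k _ ih =>
      have := mem_p S _ ih
      simpa [pInterp] using this
  | append_singleton l a ih => exact mem_c S a _ ih

/-- for all elements `a₁, a₂` of the tree structure `𝒜`, either `a₁`
belongs to the substructure generated by `{a₂}`, or `a₂` belongs to the substructure
generated by `{a₁}`.  In particular, `𝒜` is generated by the single element `(0,⟨⟩)`. -/
theorem stmt_10 :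
    (∀ a₁ a₂ : TreeDom,
      a₁ ∈ Substructure.closure L0 ({a₂} : Set TreeDom) ∨
      a₂ ∈ Substructure.closure L0 ({a₁} : Set TreeDom)) ∧
    Substructure.closure L0 ({((0 : ℕ), ([] : List ℤ))} : Set TreeDom) = ⊤ := by
  refine ⟨?_, ?_⟩
  · rintro ⟨n, t⟩ ⟨m, u⟩
    rcases le_total m n with h | h
    · exact Or.inl (mem_of_le _ m n u t (Substructure.subset_closure rfl) h)
    · exact Or.inr (mem_of_le _ n m t u (Substructure.subset_closure rfl) h)
  · rw [eq_top_iff]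
    rintro ⟨m, u⟩ _
    exact mem_of_le _ 0 m [] u (Substructure.subset_closure rfl) (Nat.zero_le m)
end

section
/- For every element x of the tree structure 𝒜, either x = c_i^𝒜(y) for some integer i and some element y of 𝒜, or the substructure of 𝒜 generated by {x} is isomorphic (as an L₀-structure) to 𝒜 itself. -/
open FirstOrder FirstOrder.Language

theorem tree_funMap_p (v : Fin 1 → TreeDom) :
    Structure.funMap (L := L0) (TreeFn.p : L0.Functions 1) v = pInterp (v 0) := rfl

theorem tree_funMap_c (i : ℤ) (v : Fin 1 → TreeDom) :
    Structure.funMap (L := L0) (TreeFn.c i : L0.Functions 1) v = cInterp i (v 0) := rfl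

/-- The shift embedding `(m,τ) ↦ (m+n,τ)`. -/
def treeShift (n : ℕ) : TreeDom ↪[L0] TreeDom where
  toFun x := (x.1 + n, x.2)
  inj' := by
    rintro ⟨a, s⟩ ⟨b, t⟩ h
    simp only [Prod.mk.injEq] at h ⊢
    exact ⟨by omega, h.2⟩
  map_fun' := by
    intro k f v
    cases f with
    | p =>
      change ((pInterp (v 0)).1 + n, (pInterp (v 0)).2) = pInterp ((v 0).1 + n, (v 0).2)
      unfold pInterp
      by_cases h : (v 0).2 = []
      · simp only [h, if_true]
        rw [Nat.add_right_comm]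
      · simp only [h, if_false]
    | c i => rfl
  map_rel' := by
    intro k r
    exact Empty.elim r

theorem treeShift_range (n : ℕ) :
    (treeShift n).toHom.range = Substructure.closure L0 ({(n, [])} : Set TreeDom) := by
  apply le_antisymm
  · rintro _ ⟨⟨m, t⟩, rfl⟩
    change ((m + n, t) : TreeDom) ∈ _
    induction t using List.reverseRecOn with
    | nil =>
      induction m with
      | zero =>
        rw [Nat.zero_add]
        exact Substructure.subset_closure rfl
      | succ m ih =>
        have h := (Substructure.closure L0 ({(n, [])} : Set TreeDom)).fun_mem
          (TreeFn.p : L0.Functions 1) (fun _ => (m + n, [])) (fun _ => ih)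
        rw [tree_funMap_p] at h
        rw [Nat.add_right_comm]
        exact h
    | append_singleton t i ih =>
      exact (Substructure.closure L0 ({(n, [])} : Set TreeDom)).fun_mem
          (TreeFn.c i : L0.Functions 1) (fun _ => (m + n, t)) (fun _ => ih)
  · rw [Substructure.closure_le]
    rintro _ rfl
    refine ⟨(0, []), ?_⟩
    change ((0 + n, []) : TreeDom) = _
    rw [Nat.zero_add]

/-- every element `x` of the tree structure `𝒜` either is `c_i^𝒜(y)` for
some integer `i` and some element `y`, or generates a substructure isomorphic (as an
`L₀`-structure) to `𝒜` itself. -/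
theorem stmt_11 (x : TreeDom) :
    (∃ (i : ℤ) (y : TreeDom), cInterp i y = x) ∨
    Nonempty ((Substructure.closure L0 ({x} : Set TreeDom)) ≃[L0] TreeDom) := by
  obtain ⟨n, t⟩ := x
  rcases List.eq_nil_or_concat t with rfl | ⟨s, i, rfl⟩
  · right
    rw [← treeShift_range]
    exact ⟨(treeShift n).equivRange.symm⟩
  · left
    exact ⟨i, (n, s), by simp [cInterp]⟩
end

section
/- Let 𝓑 be the substructure of the tree structure 𝒜 generated by {(1,⟨⟩)}. Then: (i) the underlying set of 𝓑 is {(n,τ) : n ≥ 1}, so 𝓑 is a proper substructure of 𝒜; (ii) the map (n,τ) ↦ (n+1,τ) is an isomorphism of L₀-structures from 𝒜 onto 𝓑; and (iii) 𝓑 is a Σ₁-elementary substructure of 𝒜. In particular, 𝒜 contains a proper Σ₁-elementary substructure isomorphic to itself. -/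
open FirstOrder FirstOrder.Language

/-- `𝓑`, the substructure of `𝒜` generated by `{(1,⟨⟩)}`. -/
def TreeB : L0.Substructure TreeDom :=
  Substructure.closure L0 ({((1 : ℕ), ([] : List ℤ))} : Set TreeDom)

/-- A substructure `S` of `M` is a Σ₁-elementary substructure if for every quantifier-free
formula `φ(x̄,ȳ)` and every tuple `v` of elements of `S`, if `M ⊨ ∃x̄ φ(x̄,v)` then
`S ⊨ ∃x̄ φ(x̄,v)`. -/
def Sigma1Elementary (L : Language) (M : Type*) [L.Structure M] (S : L.Substructure M) :
    Prop :=
  ∀ (k m : ℕ) (φ : L.BoundedFormula (Fin k) m), φ.IsQF → ∀ v : Fin k → S,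
    φ.exs.Realize (fun i => (v i : M)) → φ.exs.Realize v

theorem treeB_p {x : TreeDom} (h : x ∈ TreeB) : pInterp x ∈ TreeB :=
  TreeB.fun_mem (n := 1) TreeFn.p (fun _ => x) (fun _ => h)

theorem treeB_c (i : ℤ) {x : TreeDom} (h : x ∈ TreeB) : cInterp i x ∈ TreeB :=
  TreeB.fun_mem (n := 1) (TreeFn.c i) (fun _ => x) (fun _ => h)

theorem treeB_mem (x : TreeDom) : x ∈ TreeB ↔ 1 ≤ x.1 := by
  constructor
  · intro h
    let S : L0.Substructure TreeDom :=
      { carrier := {x | 1 ≤ x.1}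
        fun_mem := by
          intro n f
          cases f with
          | p =>
            intro v hv
            have h0 : 1 ≤ (v 0).1 := hv 0
            change 1 ≤ (pInterp (v 0)).1
            unfold pInterp
            split_ifs <;> simp [h0]
          | c i =>
            intro v hv
            exact hv 0 }
    have hS : TreeB ≤ S := by
      unfold TreeB
      rw [Substructure.closure_le]
      rintro y rfl
      change 1 ≤ 1
      exact le_rfl
    exact hS h
  · obtain ⟨n, τ⟩ := x
    intro h
    replace h : 1 ≤ n := h
    induction τ using List.reverseRecOn with
    | nil =>
      induction n, h using Nat.le_induction with
      | base => exact Substructure.subset_closure rfl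
      | succ n hn ih =>
        have := treeB_p ih
        simpa [pInterp] using this
    | append_singleton τ i ih => exact treeB_c i ih

/-- Move the level-zero part below the root `(1,⟨⟩)`, as the child number `k`. -/
def shiftFun (k : ℤ) (x : TreeDom) : TreeDom :=
  if x.1 = 0 then (1, k :: x.2) else x

theorem shiftFun_mem (k : ℤ) (x : TreeDom) : shiftFun k x ∈ TreeB := by
  rw [treeB_mem]
  unfold shiftFun
  split_ifs
  · exact le_rfl
  · omega

/-- The shift as a homomorphism onto `TreeB`. -/
def shiftHom (k : ℤ) : TreeDom →[L0] TreeB where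
  toFun x := ⟨shiftFun k x, shiftFun_mem k x⟩
  map_fun' := by
    intro n f
    cases f with
    | p =>
      intro v
      apply Subtype.ext
      change shiftFun k (pInterp (v 0)) = pInterp (shiftFun k (v 0))
      obtain ⟨n, τ⟩ := v 0
      rcases n with _ | n <;> rcases τ with _ | ⟨a, τ⟩ <;> simp [shiftFun, pInterp]
    | c i =>
      intro v
      apply Subtype.ext
      change shiftFun k (cInterp i (v 0)) = cInterp i (shiftFun k (v 0))
      obtain ⟨n, τ⟩ := v 0
      rcases n with _ | n <;> simp [shiftFun, cInterp]
  map_rel' := by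
    intro n r
    exact r.elim

theorem shift_inj (x y : TreeDom) :
    ∀ᶠ k in Filter.cofinite, (shiftHom k x = shiftHom k y ↔ x = y) := by
  have key : ∀ z : TreeDom, ∀ᶠ k : ℤ in Filter.cofinite, k ≠ z.2.headD 0 := fun z =>
    (Set.finite_singleton (z.2.headD 0)).subset (by intro k; simp)
  filter_upwards [key x, key y] with k hx hy
  have : shiftHom k x = shiftHom k y ↔ shiftFun k x = shiftFun k y := Subtype.ext_iff
  rw [this]
  obtain ⟨n, τ⟩ := x
  obtain ⟨m, σ⟩ := y
  refine ⟨fun h => ?_, fun h => by rw [h]⟩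
  rcases n with _ | n <;> rcases m with _ | m <;> simp [shiftFun] at h ⊢
  · exact h
  · exact hy (by simp [← h.2])
  · exact hx (by simp [h.2])
  · exact h

theorem shift_qf {k m : ℕ} (φ : L0.BoundedFormula (Fin k) m) (hφ : φ.IsQF)
    (v : Fin k → TreeDom) (xs : Fin m → TreeDom) :
    ∀ᶠ j in Filter.cofinite,
      (φ.Realize (shiftHom j ∘ v) (shiftHom j ∘ xs) ↔ φ.Realize v xs) := by
  induction hφ with
  | falsum => exact Filter.Eventually.of_forall fun _ => Iff.rfl
  | of_isAtomic h =>
    cases h with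
    | equal t₁ t₂ =>
      filter_upwards [shift_inj (t₁.realize (Sum.elim v xs)) (t₂.realize (Sum.elim v xs))]
        with j hj
      rw [BoundedFormula.realize_bdEqual, BoundedFormula.realize_bdEqual, ← Sum.comp_elim,
        HomClass.realize_term, HomClass.realize_term]
      exact hj
    | rel R ts => exact R.elim
  | imp _ _ ih₁ ih₂ =>
    filter_upwards [ih₁, ih₂] with j h₁ h₂
    rw [BoundedFormula.realize_imp, BoundedFormula.realize_imp, h₁, h₂]

/-- The map `(n,τ) ↦ (n+1,τ)` as an isomorphism. -/
def succEquiv : TreeDom ≃[L0] TreeB where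
  toFun x := ⟨(x.1 + 1, x.2), (treeB_mem _).2 (by simp)⟩
  invFun y := (y.1.1 - 1, y.1.2)
  left_inv x := by simp
  right_inv y := by
    have := (treeB_mem _).1 y.2
    apply Subtype.ext
    apply Prod.ext
    · simp; omega
    · rfl
  map_fun' := by
    intro n f
    cases f with
    | p =>
      intro v
      apply Subtype.ext
      change ((pInterp (v 0)).1 + 1, (pInterp (v 0)).2) = pInterp ((v 0).1 + 1, (v 0).2)
      unfold pInterp
      split_ifs <;> simp_all
    | c i =>
      intro v
      rfl
  map_rel' := by
    intro n r
    exact r.elim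

/-- (i) the underlying set of `𝓑` is `{(n,τ) : n ≥ 1}`, so `𝓑` is a
proper substructure of `𝒜`; (ii) the map `(n,τ) ↦ (n+1,τ)` is an isomorphism of
`L₀`-structures from `𝒜` onto `𝓑`; (iii) `𝓑` is a Σ₁-elementary substructure of `𝒜`.
In particular, `𝒜` contains a proper Σ₁-elementary substructure isomorphic to itself. -/
theorem stmt_12 :
    (TreeB : Set TreeDom) = {x : TreeDom | 1 ≤ x.1} ∧
    TreeB ≠ ⊤ ∧
    (∃ e : TreeDom ≃[L0] TreeB, ∀ x : TreeDom, (e x : TreeDom) = (x.1 + 1, x.2)) ∧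
    Sigma1Elementary L0 TreeDom TreeB := by
  refine ⟨Set.ext treeB_mem, ?_, ⟨succEquiv, fun _ => rfl⟩, ?_⟩
  · intro h
    have h0 : ((0, []) : TreeDom) ∈ TreeB := by rw [h]; exact Substructure.mem_top _
    have := (treeB_mem _).1 h0
    simp at this
  · intro k m φ hφ v h
    rw [BoundedFormula.realize_exs] at h ⊢
    obtain ⟨xs, hxs⟩ := h
    obtain ⟨j, hj⟩ := (shift_qf φ hφ (fun i => (v i : TreeDom)) xs).exists
    refine ⟨shiftHom j ∘ xs, ?_⟩
    have hv : shiftHom j ∘ (fun i => (v i : TreeDom)) = v := by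
      funext i
      apply Subtype.ext
      change shiftFun j (v i : TreeDom) = v i
      have := (treeB_mem _).1 (v i).2
      unfold shiftFun
      rw [if_neg (by omega)]
    rw [hv] at hj
    exact hj.2 hxs
end

section
/- Let 𝓑' be the substructure of the labeled tree structure 𝒜' generated by {(1,⟨⟩)} (its underlying set is {(n,τ) : n ≥ 1}). Then 𝒜' is not isomorphic to 𝓑' as L₁-structures. -/
open FirstOrder FirstOrder.Language

/-- The relation symbols of the language `L₁`: a single unary relation symbol `P`. -/
inductive TreeRel : ℕ → Type
  | P : TreeRel 1

/-- The language `L₁`: unary function symbols `p` and `c_i` (`i ∈ ℤ`) together with a unary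
relation symbol `P`. -/
def L1 : Language := ⟨TreeFn, TreeRel⟩

/-- The labeled tree `L₁`-structure `𝒜'` on `TreeDom`, where `P^{𝒜'}(n,τ)` holds if and
only if `n + |τ|` is even. -/
instance treeStructure' : L1.Structure TreeDom where
  funMap {_n} f x :=
    match f with
    | TreeFn.p => pInterp (x 0)
    | TreeFn.c i => cInterp i (x 0)
  RelMap {_n} r x :=
    match r with
    | TreeRel.P => Even ((x 0).1 + (x 0).2.length)

/-- `𝓑'`, the substructure of `𝒜'` generated by `{(1,⟨⟩)}`
(its underlying set is `{(n,τ) : n ≥ 1}`). -/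
def TreeB' : L1.Substructure TreeDom :=
  Substructure.closure L1 ({((1 : ℕ), ([] : List ℤ))} : Set TreeDom)

theorem treeB'_pos (x : TreeDom) (hx : x ∈ TreeB') : 1 ≤ x.1 := by
  let S : L1.Substructure TreeDom :=
    { carrier := {x | 1 ≤ x.1}
      fun_mem := by
        intro n f
        cases f with
        | p =>
          intro x hx
          have h := hx 0
          change 1 ≤ (pInterp (x 0)).1
          change 1 ≤ (x 0).1 at h
          unfold pInterp
          split_ifs
          · simp
          · exact h
        | c i =>
          intro x hx
          exact hx 0 }
  have hle : TreeB' ≤ S := by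
    apply Substructure.closure_le.2
    intro y hy
    rw [Set.mem_singleton_iff] at hy
    subst hy
    exact le_refl 1
  exact hle hx

theorem cp_of_ne (x : TreeDom) (hx : x.2 ≠ []) : ∃ i, cInterp i (pInterp x) = x := by
  refine ⟨x.2.getLast hx, ?_⟩
  unfold cInterp pInterp
  rw [if_neg hx]
  ext1
  · rfl
  · exact List.dropLast_append_getLast hx

theorem c_ne (i : ℤ) (x : TreeDom) : (cInterp i x).2 ≠ [] := by
  simp [cInterp]

/-- `𝒜'` is not isomorphic to `𝓑'` as `L₁`-structures. -/
theorem stmt_13 : IsEmpty (TreeDom ≃[L1] TreeB') := by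
  refine ⟨fun f => ?_⟩
  let g : TreeDom → TreeDom := fun x => (f x).1
  have ginj : Function.Injective g := fun x y h => f.injective (Subtype.ext h)
  have gp : ∀ x, g (pInterp x) = pInterp (g x) := fun x =>
    congrArg Subtype.val (f.map_fun (TreeFn.p : L1.Functions 1) (fun _ => x))
  have gc : ∀ i x, g (cInterp i x) = cInterp i (g x) := fun i x =>
    congrArg Subtype.val (f.map_fun (TreeFn.c i : L1.Functions 1) (fun _ => x))
  have gP : ∀ x, Even ((g x).1 + (g x).2.length) ↔ Even (x.1 + x.2.length) := fun x =>
    f.map_rel (TreeRel.P : L1.Relations 1) (fun _ => x)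
  have h0 : (g (0, [])).2 = [] := by
    by_contra h
    obtain ⟨i, hi⟩ := cp_of_ne _ h
    rw [← gp, ← gc] at hi
    exact c_ne i _ (congrArg Prod.snd (ginj hi))
  have hpos : 1 ≤ (g (0, [])).1 := treeB'_pos _ (f (0, [])).2
  have hk : ∀ k, g (k, []) = ((g (0, [])).1 + k, []) := by
    intro k
    induction k with
    | zero => exact Prod.ext rfl h0
    | succ k ih =>
      have h := gp (k, [])
      rw [ih] at h
      simpa [pInterp, add_assoc] using h
  have h1 : ((1 : ℕ), ([] : List ℤ)) ∈ TreeB' := Substructure.subset_closure rfl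
  obtain ⟨x, hx⟩ := f.surjective ⟨_, h1⟩
  have hgx : g x = (1, []) := congrArg Subtype.val hx
  have hx2 : x.2 = [] := by
    by_contra h
    obtain ⟨i, hi⟩ := cp_of_ne _ h
    have h2 := gc i (pInterp x)
    rw [hi, hgx] at h2
    exact c_ne i _ (congrArg Prod.snd h2).symm
  obtain ⟨k, t⟩ := x
  simp only at hx2
  subst hx2
  rw [hk] at hgx
  have hm : (g (0, [])).1 + k = 1 := congrArg Prod.fst hgx
  have hm1 : (g (0, [])).1 = 1 := by omega
  have hP := gP (0, [])
  rw [h0, hm1] at hP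
  simp at hP
end
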